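/- Let x ∈ CGA₊ satisfy x + x̃ ∈ ℝ, x·x̃ ∈ ℝ, and x·e₊₋ = e₊₋·x. Then x lies in the real span of {1, e₁₂, e₁₃, e₂₃} or x lies in the real span of {1, e₊₋}. -/

import Mathlib

open Polynomial

/-- The quadratic form of signature (4,1) on ℝ⁵ defining conformal geometric algebra. -/
noncomputable def Qcga : QuadraticForm ℝ (Fin 5 → ℝ) :=
  QuadraticMap.weightedSumSquares ℝ (fun i : Fin 5 => if (i : ℕ) = 4 then (-1 : ℝ) else 1)

/-- Conformal geometric algebra CGA = Cl(4,1). -/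
abbrev CGA := CliffordAlgebra Qcga

/-- The generators e₁, e₂, e₃, e₊, e₋ of CGA (indexed 0,…,4). -/
noncomputable def eCGA (i : Fin 5) : CGA := CliffordAlgebra.ι Qcga (Pi.single i 1)

/-!
The bivectors `e₁₂`, `e₂₃` span, with `1` and `e₁₃`, a copy of the quaternions `ℍ` in `CGA₊`, and
`CGA₊ = D ⊕ e₃₋ D` where `D = ℍ ⊕ e₊₋ ℍ`. Since `e₊₋` commutes with `D` and anticommutes with
`e₃₋`, its centralizer in `CGA₊` is `D`. Write `x = p + e₊₋ q` with `p q : ℍ`; reversion acts as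
conjugation on `ℍ` and negates `e₊₋`. If `v : ℍ` is purely imaginary and `e₊₋ v = r` is real, then
`v² = r²` because `e₊₋² = 1`, whereas `v² = -|v|²`, so `v = 0`. The imaginary quaternion `q - q̄`
satisfies this because `x + x̃` is real, hence `q` is real; then so does `q (p̄ - p)` because `x x̃`
is real, hence `q = 0` or `p` is real.
-/

open CliffordAlgebra Quaternion

section Adjoin

variable {R A : Type*} [CommSemiring R] [Semiring A] [Algebra R A] {s : Set A} {g x : A}

theorem exists_semiconjBy_of_mem_adjoin (hs : ∀ b ∈ s, ∃ c ∈ Algebra.adjoin R s, SemiconjBy g c b)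
    (hx : x ∈ Algebra.adjoin R s) : ∃ c ∈ Algebra.adjoin R s, SemiconjBy g c x := by
  induction hx using Algebra.adjoin_induction with
  | mem b hb => exact hs b hb
  | algebraMap r => exact ⟨_, algebraMap_mem _ r, (Algebra.commutes r g).symm⟩
  | add x y _ _ hx hy =>
    obtain ⟨c, hc, hcx⟩ := hx
    obtain ⟨d, hd, hdy⟩ := hy
    exact ⟨c + d, add_mem hc hd, hcx.add_right hdy⟩
  | mul x y _ _ hx hy =>
    obtain ⟨c, hc, hcx⟩ := hx
    obtain ⟨d, hd, hdy⟩ := hy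
    exact ⟨c * d, mul_mem hc hd, hcx.mul_right hdy⟩

theorem exists_eq_add_mul_of_mem_adjoin_insert (hg : g * g ∈ Algebra.adjoin R s)
    (hs : ∀ b ∈ s, ∃ c ∈ Algebra.adjoin R s, SemiconjBy g c b)
    (hx : x ∈ Algebra.adjoin R (insert g s)) :
    ∃ p ∈ Algebra.adjoin R s, ∃ q ∈ Algebra.adjoin R s, x = p + g * q := by
  induction hx using Algebra.adjoin_induction with
  | mem b hb =>
    obtain rfl | hb := hb
    · exact ⟨0, zero_mem _, 1, one_mem _, by simp⟩
    · exact ⟨b, Algebra.subset_adjoin hb, 0, zero_mem _, by simp⟩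
  | algebraMap r => exact ⟨_, algebraMap_mem _ r, 0, zero_mem _, by simp⟩
  | add x y _ _ hx hy =>
    obtain ⟨p, hp, q, hq, rfl⟩ := hx
    obtain ⟨p', hp', q', hq', rfl⟩ := hy
    exact ⟨p + p', add_mem hp hp', q + q', add_mem hq hq', by rw [mul_add, add_add_add_comm]⟩
  | mul x y _ _ hx hy =>
    obtain ⟨p, hp, q, hq, rfl⟩ := hx
    obtain ⟨p', hp', q', hq', rfl⟩ := hy
    obtain ⟨c, hc, hcp⟩ := exists_semiconjBy_of_mem_adjoin hs hp
    obtain ⟨d, hd, hdq⟩ := exists_semiconjBy_of_mem_adjoin hs hq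
    refine ⟨p * p' + g * g * (d * q'),
      add_mem (mul_mem hp hp') (mul_mem hg (mul_mem hd hq')),
      c * q' + q * p', add_mem (mul_mem hc hq') (mul_mem hq hp'), ?_⟩
    calc (p + g * q) * (p' + g * q')
        = p * p' + p * g * q' + g * q * p' + g * (q * g) * q' := by
          simp only [add_mul, mul_add, mul_assoc]; abel
      _ = p * p' + g * c * q' + g * q * p' + g * (g * d) * q' := by rw [hcp.eq, hdq.eq]
      _ = p * p' + g * g * (d * q') + g * (c * q' + q * p') := by
          simp only [mul_add, mul_assoc]; abel

end Adjoin

section Anticommute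

variable {A : Type*} [Ring A] {a b c : A}

theorem anticommute_symm (h : SemiconjBy a b (-b)) : SemiconjBy b a (-a) := by
  rw [SemiconjBy, neg_mul, h.eq, neg_mul, neg_neg]

theorem mul_mul_self_of_anticommute (h : SemiconjBy a b (-b)) :
    a * b * (a * b) = -(a * a * (b * b)) := by
  rw [mul_assoc, ← mul_assoc b, (anticommute_symm h).eq, neg_mul, neg_mul, mul_neg]
  simp only [mul_assoc]

theorem commute_mul_left_of_anticommute (hac : SemiconjBy a c (-c)) (hbc : SemiconjBy b c (-c)) :
    Commute (a * b) c := by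
  simpa only [neg_neg] using! hac.neg_right.mul_left hbc

end Anticommute

theorem eq_zero_of_commute_add_mul {A : Type*} [Ring A] [IsAddTorsionFree A] {g j p q : A}
    (hg : IsUnit g) (hj : IsUnit j) (hjg : SemiconjBy j g (-g)) (hp : Commute j p)
    (hq : Commute j q) (h : Commute j (p + g * q)) : q = 0 := by
  have hgq : Commute j (g * q) := by simpa only [add_sub_cancel_left] using! h.sub_right hp
  have hneg : g * q * j = -(g * q * j) := by
    rw [← neg_mul, ← neg_mul, ← (hjg.mul_right hq).eq, hgq.eq]
  rwa [self_eq_neg, hj.mul_left_eq_zero, hg.mul_right_eq_zero] at hneg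

section QuaternionBasis

variable {R A : Type*} [CommRing R] [Ring A] [Algebra R A] {c₁ c₂ c₃ : R}

theorem adjoin_le_range_liftHom (q : QuaternionAlgebra.Basis A c₁ c₂ c₃) :
    Algebra.adjoin R {q.i, q.j} ≤ q.liftHom.range := by
  rw [QuaternionAlgebra.Basis.range_liftHom]
  exact Algebra.adjoin_mono (Set.insert_subset_insert (by simp))

theorem commute_liftHom {g : A} (q : QuaternionAlgebra.Basis A c₁ c₂ c₃) (hi : Commute g q.i)
    (hj : Commute g q.j) (x : ℍ[R,c₁,c₂,c₃]) : Commute g (q.liftHom x) := by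
  have hk : Commute g q.k := q.i_mul_j ▸ hi.mul_right hj
  have hx : q.liftHom x ∈ Algebra.adjoin R {q.i, q.j, q.k} := by
    rw [← QuaternionAlgebra.Basis.range_liftHom]
    exact AlgHom.mem_range_self _ x
  exact Algebra.commute_of_mem_adjoin_of_forall_mem_commute hx (by simp [hi, hj, hk])

theorem liftHom_mem_span (q : QuaternionAlgebra.Basis A c₁ c₂ c₃) (x : ℍ[R,c₁,c₂,c₃]) :
    q.liftHom x ∈ Submodule.span R {1, q.i, q.k, q.j} := by
  have hmem {b : A} (hb : b ∈ ({1, q.i, q.k, q.j} : Set A)) (r : R) :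
      r • b ∈ Submodule.span R {1, q.i, q.k, q.j} :=
    Submodule.smul_mem _ r (Submodule.subset_span hb)
  rw [QuaternionAlgebra.Basis.liftHom_apply, QuaternionAlgebra.Basis.lift,
    Algebra.algebraMap_eq_smul_one]
  exact add_mem (add_mem (add_mem (hmem (by simp) _) (hmem (by simp) _)) (hmem (by simp) _))
    (hmem (by simp) _)

theorem reverse_liftHom {M : Type*} [AddCommGroup M] [Module R M] {Q : QuadraticForm R M}
    (q : QuaternionAlgebra.Basis (CliffordAlgebra Q) c₁ 0 c₃) (hi : reverse q.i = -q.i)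
    (hj : reverse q.j = -q.j) (x : ℍ[R,c₁,0,c₃]) :
    reverse (q.liftHom x) = q.liftHom (star x) := by
  have hk : reverse q.k = -q.k := by
    rw [← q.i_mul_j, reverse.map_mul, hi, hj, neg_mul_neg, q.j_mul_i, zero_smul, zero_sub,
      q.i_mul_j]
  simp [QuaternionAlgebra.Basis.lift, hi, hj, hk]

/-- The quaternion units `ab`, `bc`, `ac` formed from three anticommuting square roots of `1`,
for instance the unit bivectors of Euclidean 3-space. -/
def bivectorBasis {a b c : A} (ha : a * a = 1) (hb : b * b = 1) (hc : c * c = 1)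
    (hab : SemiconjBy a b (-b)) (hac : SemiconjBy a c (-c)) (hbc : SemiconjBy b c (-c)) :
    QuaternionAlgebra.Basis A (-1 : R) 0 (-1) where
  i := a * b
  j := b * c
  k := a * c
  i_mul_i := by rw [mul_mul_self_of_anticommute hab, ha, hb]; simp
  j_mul_j := by rw [mul_mul_self_of_anticommute hbc, hb, hc]; simp
  i_mul_j := by rw [mul_assoc, ← mul_assoc b, hb, one_mul]
  j_mul_i := by
    have hcomm : Commute (b * c) a :=
      commute_mul_left_of_anticommute (anticommute_symm hab) (anticommute_symm hac)
    calc b * c * (a * b) = a * b * (c * b) := by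
          rw [← mul_assoc, hcomm.eq, mul_assoc, mul_assoc, mul_assoc]
      _ = -(a * (b * b) * c) := by
          rw [(anticommute_symm hbc).eq]; simp only [mul_assoc, neg_mul, mul_neg]
      _ = (0 : R) • (b * c) - a * c := by rw [hb, mul_one, zero_smul, zero_sub]

end QuaternionBasis

section QuaternionSubalgebra

variable {R A : Type*} [Field R] [LinearOrder R] [IsStrictOrderedRing R] [Ring A] [Algebra R A]
  {φ : ℍ[R] →ₐ[R] A} {u : A}

theorem eq_zero_of_mul_map_eq_algebraMap [Nontrivial A] (hu : u * u = 1) {v : ℍ[R]} {r : R}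
    (hv : star v = -v) (h : u * φ v = algebraMap R A r) : v = 0 := by
  have hφv : φ v = algebraMap R A r * u := by
    rw [Algebra.commutes, ← h, ← mul_assoc, hu, one_mul]
  have hsq : algebraMap R A (-Quaternion.normSq v) = algebraMap R A (r * r) := by
    calc algebraMap R A (-Quaternion.normSq v) = φ (v * v) := by
          rw [← φ.commutes, Quaternion.algebraMap_def, Quaternion.coe_neg,
            ← Quaternion.self_mul_star, hv, mul_neg, neg_neg]
      _ = algebraMap R A r * (u * φ v) := by rw [map_mul, ← mul_assoc, ← hφv]
      _ = algebraMap R A (r * r) := by rw [h, map_mul]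
  have hnorm := FaithfulSMul.algebraMap_injective R A hsq
  exact Quaternion.normSq_eq_zero.1
    (le_antisymm (neg_nonneg.1 (hnorm ▸ mul_self_nonneg r)) Quaternion.normSq_nonneg)

theorem star_eq_self_of_add_eq_algebraMap [Nontrivial A] (hu : u * u = 1) {p q : ℍ[R]} {r : R}
    (h : φ p + u * φ q + (φ (star p) - u * φ (star q)) = algebraMap R A r) : star q = q := by
  have hp : φ p + φ (star p) = algebraMap R A (2 * p.re) := by
    rw [← map_add, Quaternion.self_add_star', ← φ.commutes, Quaternion.algebraMap_def]
  have hreal : u * φ (q - star q) = algebraMap R A (r - 2 * p.re) := by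
    rw [map_sub, map_sub, mul_sub, ← hp, ← h]
    abel
  have hskew : star (q - star q) = -(q - star q) := by rw [star_sub, star_star, neg_sub]
  exact (sub_eq_zero.1 (eq_zero_of_mul_map_eq_algebraMap hu hskew hreal)).symm

theorem star_eq_self_or_eq_zero_of_mul_eq_algebraMap [Nontrivial A] (hu : u * u = 1)
    (hφ : ∀ v, Commute u (φ v)) {p q : ℍ[R]} (hq : star q = q) {r : R}
    (h : (φ p + u * φ q) * (φ (star p) - u * φ (star q)) = algebraMap R A r) :
    star p = p ∨ q = 0 := by
  obtain ⟨a, rfl⟩ : ∃ a : R, q = a := ⟨_, Quaternion.star_eq_self.1 hq⟩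
  have hdiff : φ a * φ (star p) - φ p * φ a = φ (a • (star p - p)) := by
    rw [← map_mul, ← map_mul, ← map_sub, ← Quaternion.coe_commutes a p, ← mul_sub,
      Quaternion.coe_mul_eq_smul]
  have hexpand : algebraMap R A r =
      φ (p * star p) - φ (a * a) + u * φ (a • (star p - p)) := by
    calc algebraMap R A r = (φ p + u * φ a) * (φ (star p) - u * φ a) := by rw [← h, hq]
      _ = φ p * φ (star p) - u * u * (φ a * φ a) + u * (φ a * φ (star p) - φ p * φ a) := by
        simp only [mul_sub, add_mul, mul_assoc, (hφ _).symm.left_comm]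
        abel
      _ = φ (p * star p) - φ (a * a) + u * φ (a • (star p - p)) := by
        rw [hu, one_mul, hdiff, map_mul, map_mul]
  have hreal : u * φ (a • (star p - p)) = algebraMap R A (r - Quaternion.normSq p + a * a) := by
    have hp : φ (p * star p) = algebraMap R A (Quaternion.normSq p) := by
      rw [Quaternion.self_mul_star, ← φ.commutes, Quaternion.algebraMap_def]
    have ha : φ (a * a) = algebraMap R A (a * a) := by
      rw [← φ.commutes, Quaternion.algebraMap_def, Quaternion.coe_mul]
    rw [map_add, map_sub, hexpand, hp, ha]
    abel
  have hskew : star (a • (star p - p)) = -(a • (star p - p)) := by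
    rw [Quaternion.star_smul, star_sub, star_star, ← smul_neg, neg_sub]
  obtain ha | hp := smul_eq_zero.1 (eq_zero_of_mul_map_eq_algebraMap hu hskew hreal)
  · exact .inr (by rw [ha, Quaternion.coe_zero])
  · exact .inl (sub_eq_zero.1 hp)

end QuaternionSubalgebra

section EvenSubalgebra

variable {R M : Type*} [CommRing R] [AddCommGroup M] [Module R M] {Q : QuadraticForm R M}

theorem even_le_of_span_eq_top {s : Set M} (hs : Submodule.span R s = ⊤) {w : M}
    (hw : IsUnit (Q w)) {S : Subalgebra R (CliffordAlgebra Q)} (hS : ∀ v ∈ s, ι Q v * ι Q w ∈ S) :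
    even Q ≤ S := by
  have hright (v : M) : ι Q v * ι Q w ∈ S := by
    have hle : Submodule.span R s ≤
        S.toSubmodule.comap ((LinearMap.mulRight R (ι Q w)).comp (ι Q)) :=
      Submodule.span_le.2 hS
    exact hle (hs ▸ Submodule.mem_top)
  have hleft (v : M) : ι Q w * ι Q v ∈ S := by
    rw [ι_mul_ι_comm]
    exact sub_mem (algebraMap_mem S _) (hright v)
  have hmul (u v : M) : ι Q u * ι Q v ∈ S := by
    obtain ⟨c, hc⟩ := hw.exists_right_inv
    have hsplit : ι Q u * ι Q v = c • (ι Q u * ι Q w * (ι Q w * ι Q v)) := by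
      rw [mul_assoc, ← mul_assoc (ι Q w), ι_sq_scalar, ← Algebra.smul_def, mul_smul_comm,
        smul_smul, mul_comm c, hc, one_smul]
    exact hsplit ▸ S.smul_mem (mul_mem (hright u) (hleft v)) c
  intro x hx
  induction x, hx using even_induction with
  | algebraMap r => exact algebraMap_mem S r
  | add x y _ _ hx hy => exact add_mem hx hy
  | ι_mul_ι_mul u v x _ hx => exact mul_mem (hmul u v) hx

end EvenSubalgebra

section WeightedSumSquares

variable {R n : Type*} [CommRing R] [Fintype n] [DecidableEq n]

theorem weightedSumSquares_single (w : n → R) (i : n) (r : R) :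
    QuadraticMap.weightedSumSquares R w (Pi.single i r) = w i * (r * r) := by
  simp [Pi.single_apply]

theorem isOrtho_weightedSumSquares_single (w : n → R) {i j : n} (h : i ≠ j) (r s : R) :
    (QuadraticMap.weightedSumSquares R w).IsOrtho (Pi.single i r) (Pi.single j s) := by
  rw [QuadraticMap.isOrtho_def]
  simp only [QuadraticMap.weightedSumSquares_apply, Pi.add_apply, ← Finset.sum_add_distrib]
  refine Finset.sum_congr rfl fun k _ => ?_
  obtain rfl | hk := eq_or_ne k i
  · simp [h]
  · simp [hk]

end WeightedSumSquares

theorem Qcga_single (i : Fin 5) : Qcga (Pi.single i 1) = if (i : ℕ) = 4 then -1 else 1 := by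
  rw [Qcga, weightedSumSquares_single, mul_one, mul_one]

theorem eCGA_mul_self {i : Fin 5} (hi : i ≠ 4) : eCGA i * eCGA i = 1 := by
  have hi' : (i : ℕ) ≠ 4 := Fin.val_ne_of_ne hi
  rw [eCGA, ι_sq_scalar, Qcga_single, if_neg hi', map_one]

theorem eCGA_four_mul_self : eCGA 4 * eCGA 4 = -1 := by
  have h4 : ((4 : Fin 5) : ℕ) = 4 := rfl
  rw [eCGA, ι_sq_scalar, Qcga_single, if_pos h4, map_neg, map_one]

theorem eCGA_anticommute {i j : Fin 5} (h : i ≠ j) :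
    SemiconjBy (eCGA i) (eCGA j) (-eCGA j) := by
  rw [SemiconjBy, neg_mul]
  exact ι_mul_ι_comm_of_isOrtho (isOrtho_weightedSumSquares_single _ h 1 1)

theorem commute_eCGA_mul_eCGA {i j k l : Fin 5} (hik : i ≠ k) (hil : i ≠ l) (hjk : j ≠ k)
    (hjl : j ≠ l) : Commute (eCGA i * eCGA j) (eCGA k * eCGA l) :=
  (commute_mul_left_of_anticommute (eCGA_anticommute hik) (eCGA_anticommute hjk)).mul_right
    (commute_mul_left_of_anticommute (eCGA_anticommute hil) (eCGA_anticommute hjl))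

theorem eCGA_mul_eCGA_anticommute {i j k : Fin 5} (hij : i ≠ j) (hik : i ≠ k) (hjk : j ≠ k) :
    SemiconjBy (eCGA i * eCGA j) (eCGA j * eCGA k) (-(eCGA j * eCGA k)) := by
  have hj : SemiconjBy (eCGA i * eCGA j) (eCGA j) (-eCGA j) :=
    (eCGA_anticommute hij).mul_left (Commute.refl _)
  have hk : Commute (eCGA i * eCGA j) (eCGA k) :=
    commute_mul_left_of_anticommute (eCGA_anticommute hik) (eCGA_anticommute hjk)
  simpa only [neg_mul] using hj.mul_right hk

theorem eCGA_mul_eCGA_four_anticommute {i j : Fin 5} (hij : i ≠ j) (hi : i ≠ 4) (hj : j ≠ 4) :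
    SemiconjBy (eCGA i * eCGA 4) (eCGA j * eCGA 4) (-(eCGA j * eCGA 4)) := by
  have h := eCGA_mul_eCGA_anticommute hi hij hj.symm
  simpa only [(eCGA_anticommute hj.symm).eq, neg_mul, neg_neg] using h.neg_right

theorem eCGA_mul_eCGA_four_mul_self {i : Fin 5} (hi : i ≠ 4) :
    eCGA i * eCGA 4 * (eCGA i * eCGA 4) = 1 := by
  rw [mul_mul_self_of_anticommute (eCGA_anticommute hi), eCGA_mul_self hi, eCGA_four_mul_self,
    one_mul, neg_neg]

theorem reverse_eCGA_mul_eCGA {i j : Fin 5} (h : i ≠ j) :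
    reverse (eCGA i * eCGA j) = -(eCGA i * eCGA j) := by
  rw [reverse.map_mul, eCGA, eCGA, reverse_ι, reverse_ι, ← eCGA, ← eCGA,
    (eCGA_anticommute h.symm).eq, neg_mul]

/-- The quaternion units `i = e₁₂`, `j = e₂₃`, `k = e₁₃` in CGA. -/
noncomputable def rotorBasis : QuaternionAlgebra.Basis CGA (-1 : ℝ) 0 (-1) :=
  bivectorBasis (a := eCGA 0) (b := eCGA 1) (c := eCGA 2) (eCGA_mul_self (by decide))
    (eCGA_mul_self (by decide)) (eCGA_mul_self (by decide)) (eCGA_anticommute (by decide))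
    (eCGA_anticommute (by decide)) (eCGA_anticommute (by decide))

/-- The embedding of the quaternions into CGA as the even subalgebra of Euclidean 3-space, whose
unit elements are the rotors. -/
noncomputable def rotorHom : ℍ[ℝ] →ₐ[ℝ] CGA := rotorBasis.liftHom

theorem adjoin_le_range_rotorHom :
    Algebra.adjoin ℝ {eCGA 0 * eCGA 1, eCGA 1 * eCGA 2} ≤ rotorHom.range :=
  adjoin_le_range_liftHom rotorBasis

theorem rotorHom_mem_span (p : ℍ[ℝ]) :
    rotorHom p ∈
      Submodule.span ℝ {1, eCGA 0 * eCGA 1, eCGA 0 * eCGA 2, eCGA 1 * eCGA 2} :=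
  liftHom_mem_span rotorBasis p

theorem commute_rotorHom (p : ℍ[ℝ]) : Commute (eCGA 3 * eCGA 4) (rotorHom p) :=
  commute_liftHom rotorBasis
    (commute_eCGA_mul_eCGA (by decide) (by decide) (by decide) (by decide))
    (commute_eCGA_mul_eCGA (by decide) (by decide) (by decide) (by decide)) p

theorem reverse_rotorHom_add_mul_rotorHom (p q : ℍ[ℝ]) :
    reverse (rotorHom p + eCGA 3 * eCGA 4 * rotorHom q) =
      rotorHom (star p) - eCGA 3 * eCGA 4 * rotorHom (star q) := by
  have hreverse (v : ℍ[ℝ]) : reverse (rotorHom v) = rotorHom (star v) :=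
    reverse_liftHom rotorBasis (reverse_eCGA_mul_eCGA (by decide))
      (reverse_eCGA_mul_eCGA (by decide)) v
  rw [map_add, reverse.map_mul, hreverse, hreverse, reverse_eCGA_mul_eCGA (by decide), mul_neg,
    ← (commute_rotorHom _).eq, ← sub_eq_add_neg]

theorem even_Qcga_le_adjoin :
    even Qcga ≤ Algebra.adjoin ℝ
      {eCGA 2 * eCGA 4, eCGA 3 * eCGA 4, eCGA 0 * eCGA 1, eCGA 1 * eCGA 2} := by
  set S := Algebra.adjoin ℝ
    {eCGA 2 * eCGA 4, eCGA 3 * eCGA 4, eCGA 0 * eCGA 1, eCGA 1 * eCGA 2}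
  have h24 : eCGA 2 * eCGA 4 ∈ S := Algebra.subset_adjoin (by simp)
  have h34 : eCGA 3 * eCGA 4 ∈ S := Algebra.subset_adjoin (by simp)
  have h01 : eCGA 0 * eCGA 1 ∈ S := Algebra.subset_adjoin (by simp)
  have h12 : eCGA 1 * eCGA 2 ∈ S := Algebra.subset_adjoin (by simp)
  have hstep {i j : Fin 5} (hj : j ≠ 4) (hij : eCGA i * eCGA j ∈ S) (hj4 : eCGA j * eCGA 4 ∈ S) :
      eCGA i * eCGA 4 ∈ S := by
    have hmul : eCGA i * eCGA j * (eCGA j * eCGA 4) = eCGA i * eCGA 4 := by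
      rw [mul_assoc, ← mul_assoc (eCGA j), eCGA_mul_self hj, one_mul]
    exact hmul ▸ mul_mem hij hj4
  have h14 : eCGA 1 * eCGA 4 ∈ S := hstep (by decide) h12 h24
  have h04 : eCGA 0 * eCGA 4 ∈ S := hstep (by decide) h01 h14
  have h44 : eCGA 4 * eCGA 4 ∈ S := eCGA_four_mul_self ▸ neg_mem (one_mem S)
  have h4 : IsUnit (Qcga (Pi.single 4 1)) := by simp [Qcga_single]
  refine even_le_of_span_eq_top (Pi.basisFun ℝ (Fin 5)).span_eq h4 ?_
  rintro _ ⟨i, rfl⟩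
  rw [Pi.basisFun_apply]
  fin_cases i
  exacts [h04, h14, h24, h34, h44]

theorem exists_eq_add_mul_of_mem_even {x : CGA} (hx : x ∈ even Qcga) :
    ∃ p ∈ Algebra.adjoin ℝ {eCGA 3 * eCGA 4, eCGA 0 * eCGA 1, eCGA 1 * eCGA 2},
      ∃ q ∈ Algebra.adjoin ℝ {eCGA 3 * eCGA 4, eCGA 0 * eCGA 1, eCGA 1 * eCGA 2},
        x = p + eCGA 2 * eCGA 4 * q := by
  have h34 : SemiconjBy (eCGA 2 * eCGA 4) (-(eCGA 3 * eCGA 4)) (eCGA 3 * eCGA 4) := by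
    have h := eCGA_mul_eCGA_four_anticommute (i := 2) (j := 3) (by decide) (by decide) (by decide)
    simpa only [neg_neg] using h.neg_right
  have h01 : Commute (eCGA 2 * eCGA 4) (eCGA 0 * eCGA 1) :=
    commute_eCGA_mul_eCGA (by decide) (by decide) (by decide) (by decide)
  have h12 : SemiconjBy (eCGA 2 * eCGA 4) (-(eCGA 1 * eCGA 2)) (eCGA 1 * eCGA 2) := by
    have h := anticommute_symm <|
      eCGA_mul_eCGA_anticommute (i := 1) (j := 2) (k := 4) (by decide) (by decide) (by decide)
    simpa only [neg_neg] using h.neg_right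
  refine exists_eq_add_mul_of_mem_adjoin_insert ?_ ?_ (even_Qcga_le_adjoin hx)
  · exact eCGA_mul_eCGA_four_mul_self (i := 2) (by decide) ▸ one_mem _
  · rintro b (rfl | rfl | rfl)
    · exact ⟨_, neg_mem (Algebra.subset_adjoin (Set.mem_insert _ _)), h34⟩
    · exact ⟨_, Algebra.subset_adjoin (by simp), h01⟩
    · exact ⟨_, neg_mem (Algebra.subset_adjoin (by simp)), h12⟩

theorem exists_eq_rotorHom_add_mul_of_mem_adjoin {x : CGA}
    (hx : x ∈ Algebra.adjoin ℝ {eCGA 3 * eCGA 4, eCGA 0 * eCGA 1, eCGA 1 * eCGA 2}) :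
    ∃ p q : ℍ[ℝ], x = rotorHom p + eCGA 3 * eCGA 4 * rotorHom q := by
  have hsq : eCGA 3 * eCGA 4 * (eCGA 3 * eCGA 4) = 1 := eCGA_mul_eCGA_four_mul_self (by decide)
  have hcomm : ∀ b ∈ ({eCGA 0 * eCGA 1, eCGA 1 * eCGA 2} : Set CGA),
      Commute (eCGA 3 * eCGA 4) b := by
    rintro b (rfl | rfl) <;>
      exact commute_eCGA_mul_eCGA (by decide) (by decide) (by decide) (by decide)
  obtain ⟨a, ha, b, hb, rfl⟩ := exists_eq_add_mul_of_mem_adjoin_insert (hsq ▸ one_mem _)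
    (fun b hb => ⟨b, Algebra.subset_adjoin hb, hcomm b hb⟩) hx
  obtain ⟨p, rfl⟩ := adjoin_le_range_rotorHom ha
  obtain ⟨q, rfl⟩ := adjoin_le_range_rotorHom hb
  exact ⟨p, q, rfl⟩

theorem exists_eq_rotorHom_add_mul_of_commute {x : CGA} (hx : x ∈ even Qcga)
    (hcomm : Commute (eCGA 3 * eCGA 4) x) :
    ∃ p q : ℍ[ℝ], x = rotorHom p + eCGA 3 * eCGA 4 * rotorHom q := by
  have hanti := eCGA_mul_eCGA_four_anticommute (i := 3) (j := 2) (by decide) (by decide) (by decide)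
  have hunit {i : Fin 5} (hi : i ≠ 4) : IsUnit (eCGA i * eCGA 4) :=
    isUnit_iff_exists.2 ⟨_, eCGA_mul_eCGA_four_mul_self hi, eCGA_mul_eCGA_four_mul_self hi⟩
  have hcentral {y : CGA}
      (hy : y ∈ Algebra.adjoin ℝ {eCGA 3 * eCGA 4, eCGA 0 * eCGA 1, eCGA 1 * eCGA 2}) :
      Commute (eCGA 3 * eCGA 4) y := by
    obtain ⟨p, q, rfl⟩ := exists_eq_rotorHom_add_mul_of_mem_adjoin hy
    exact (commute_rotorHom p).add_right ((Commute.refl _).mul_right (commute_rotorHom q))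
  obtain ⟨c, hc, d, hd, rfl⟩ := exists_eq_add_mul_of_mem_even hx
  have : IsAddTorsionFree CGA := .of_isTorsionFree ℝ CGA
  have hd0 : d = 0 := eq_zero_of_commute_add_mul (hunit (i := 2) (by decide))
    (hunit (i := 3) (by decide)) hanti (hcentral hc) (hcentral hd) hcomm
  rw [hd0, mul_zero, add_zero]
  exact exists_eq_rotorHom_add_mul_of_mem_adjoin hc

/-- if `x ∈ CGA₊` satisfies `x + x̃ ∈ ℝ`, `x·x̃ ∈ ℝ` and `x` commutes
with `e₊₋`, then `x` lies in the real span of `{1, e₁₂, e₁₃, e₂₃}` or in the real span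
of `{1, e₊₋}`. -/
theorem stmt9 (x : CGA) (hx : x ∈ CliffordAlgebra.even Qcga)
    (h1 : ∃ r : ℝ, x + CliffordAlgebra.reverse x = algebraMap ℝ CGA r)
    (h2 : ∃ r : ℝ, x * CliffordAlgebra.reverse x = algebraMap ℝ CGA r)
    (hcomm : x * (eCGA 3 * eCGA 4) = (eCGA 3 * eCGA 4) * x) :
    x ∈ Submodule.span ℝ
        ({1, eCGA 0 * eCGA 1, eCGA 0 * eCGA 2, eCGA 1 * eCGA 2} : Set CGA) ∨
    x ∈ Submodule.span ℝ ({1, eCGA 3 * eCGA 4} : Set CGA) := by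
  obtain ⟨p, q, rfl⟩ := exists_eq_rotorHom_add_mul_of_commute hx hcomm.symm
  obtain ⟨r, hr⟩ := h1
  obtain ⟨s, hs⟩ := h2
  rw [reverse_rotorHom_add_mul_rotorHom] at hr hs
  have hsq : eCGA 3 * eCGA 4 * (eCGA 3 * eCGA 4) = 1 := eCGA_mul_eCGA_four_mul_self (by decide)
  have hq : star q = q := star_eq_self_of_add_eq_algebraMap hsq hr
  obtain hp | rfl := star_eq_self_or_eq_zero_of_mul_eq_algebraMap hsq commute_rotorHom hq hs
  · right
    have hreal {v : ℍ[ℝ]} (hv : star v = v) : rotorHom v = v.re • 1 := by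
      rw [Quaternion.star_eq_self.1 hv, ← Algebra.algebraMap_eq_smul_one]
      exact rotorHom.commutes v.re
    exact Submodule.mem_span_pair.2 ⟨p.re, q.re, by rw [hreal hp, hreal hq, mul_smul_one]⟩
  · left
    simpa only [map_zero, mul_zero, add_zero] using rotorHom_mem_span p
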